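/- arXiv:2108.03396 — 4 statements merged into one kernel-verified Lean document; each statement's English description precedes it below -/
import Mathlib

section
/- Let m ≥ 3 and let F ∈ ℚ[x₁,…,x_m] be a homogeneous cubic form that is smooth, meaning the only common zero in ℂ^m of the partial derivatives ∂F/∂x₁,…,∂F/∂x_m is the origin. If L ⊆ ℚ^m is a ℚ-linear subspace with F(x) = 0 for every x ∈ L, then dim_ℚ L ≤ ⌊m/2⌋. -/
/-!
Let `L` have dimension `d` with basis `b₁, …, b_d`, and suppose `d > m - d`. Parametrise `L ⊗ ℂ` by
`y ↦ ∑ yᵢ bᵢ` and pull the partial derivatives of `F` back to polynomials `gⱼ` in `y₁, …, y_d`.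
Since `F` vanishes on `L`, hence on `L ⊗ ℂ`, the chain rule shows that the combination
`∑ⱼ cⱼ gⱼ` is zero whenever `c ∈ L ⊗ ℂ`. So the `gⱼ` span a space of dimension at most
`m - d < d`. They are quadratic forms, so they vanish at the origin of `ℂ^d`, and fewer than `d`
equations in `d` unknowns cannot have exactly one solution (`exists_common_zero`). A nonzero
common zero `y` of the `gⱼ` yields the nonzero point `∑ yᵢ bᵢ` at which the gradient of `F`
vanishes, contradicting smoothness.

The statement on common zeros combines the Nullstellensatz with Krull's height theorem: if the
equations cut out a single point, its maximal ideal is minimal over the ideal they generate, so has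
height at most the number of equations, whereas it should have height `d`.
-/

open MvPolynomial

/-- Krull's height theorem, in the form: if the polynomials in `V` have `x` as their only common
zero, then the height of the maximal ideal of `x` is at most `dim V`. -/
theorem height_le_finrank {d : ℕ} (V : Submodule ℂ (MvPolynomial (Fin d) ℂ))
    [FiniteDimensional ℂ V] (x : Fin d → ℂ)
    (hV : ∀ y : Fin d → ℂ, (∀ p ∈ V, aeval y p = 0) ↔ y = x) :
    (vanishingIdeal ℂ {x} : Ideal (MvPolynomial (Fin d) ℂ)).height ≤ Module.finrank ℂ V := by
  let b := Module.finBasis ℂ V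
  let s : Finset (MvPolynomial (Fin d) ℂ) :=
    Finset.univ.image fun i ↦ (b i : MvPolynomial (Fin d) ℂ)
  have hs : Submodule.span ℂ (s : Set (MvPolynomial (Fin d) ℂ)) = V := by
    have h := congrArg (Submodule.map V.subtype) b.span_eq
    rw [Submodule.map_span, Submodule.map_top, Submodule.range_subtype, ← Set.range_comp] at h
    simpa [s, Function.comp_def] using h
  have hzero : zeroLocus ℂ (Ideal.span (s : Set (MvPolynomial (Fin d) ℂ))) = {x} := by
    ext y
    rw [zeroLocus_span, Set.mem_singleton_iff, ← hV y]
    refine ⟨fun h p hp ↦ ?_, fun h p hp ↦ h p (hs ▸ Submodule.subset_span hp)⟩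
    rw [← hs] at hp
    have : Submodule.span ℂ (s : Set _) ≤ LinearMap.ker (aeval (R := ℂ) y).toLinearMap :=
      Submodule.span_le.2 h
    exact this hp
  have hrad := vanishingIdeal_zeroLocus_eq_radical (K := ℂ)
    (Ideal.span (s : Set (MvPolynomial (Fin d) ℂ)))
  rw [hzero] at hrad
  have hmin : (vanishingIdeal ℂ {x} : Ideal (MvPolynomial (Fin d) ℂ)) ∈
      (Ideal.span (s : Set (MvPolynomial (Fin d) ℂ))).minimalPrimes := by
    rw [← Ideal.radical_minimalPrimes, ← hrad, Ideal.minimalPrimes_eq_subsingleton_self]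
    rfl
  refine (Ideal.height_le_card_of_mem_minimalPrimes_span_finset hmin).trans ?_
  exact_mod_cast Finset.card_image_le.trans (by simp)

/-- A space of dimension less than `d` of polynomials in `d` variables, all vanishing at the origin,
has another common zero. -/
theorem exists_common_zero {d : ℕ} (V : Submodule ℂ (MvPolynomial (Fin d) ℂ))
    [FiniteDimensional ℂ V] (hd : Module.finrank ℂ V < d)
    (h0 : ∀ p ∈ V, aeval (0 : Fin d → ℂ) p = 0) :
    ∃ y : Fin d → ℂ, y ≠ 0 ∧ ∀ p ∈ V, aeval y p = 0 := by
  by_contra! hcon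
  have hdim : ringKrullDim (MvPolynomial (Fin d) ℂ) = d := by simp
  have : FiniteRingKrullDim (MvPolynomial (Fin d) ℂ) :=
    finiteRingKrullDim_iff_ne_bot_and_top.2
      ⟨by simp [hdim], by
        rw [hdim]
        exact ne_of_beq_false rfl⟩
  -- Some maximal ideal has height `d`; it belongs to a point `x`. Translating `V` by `x` moves its
  -- only common zero from the origin to `x`, so there is no need to know the height at the origin.
  obtain ⟨M, hM, hMh⟩ := Ideal.exists_isMaximal_height (R := MvPolynomial (Fin d) ℂ)
  obtain ⟨x, rfl⟩ := eq_vanishingIdeal_singleton_of_isMaximal ℂ hM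
  let τ : MvPolynomial (Fin d) ℂ →ₐ[ℂ] MvPolynomial (Fin d) ℂ := aeval fun i ↦ X i - C (x i)
  have hτ (y : Fin d → ℂ) (p) : aeval y (τ p) = aeval (y - x) p := by
    rw [← AlgHom.comp_apply]
    congr 1
    ext i
    simp [τ]
  have h := height_le_finrank (V.map τ.toLinearMap) x fun y ↦ by
    constructor
    · intro hy
      by_contra hne
      obtain ⟨p, hp, hpy⟩ := hcon (y - x) (sub_ne_zero.2 hne)
      exact hpy (hτ y p ▸ hy _ ⟨p, hp, rfl⟩)
    · rintro rfl _ ⟨p, hp, rfl⟩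
      simpa [hτ] using h0 p hp
  have hfr := Submodule.finrank_map_le τ.toLinearMap V
  have hMh' : (vanishingIdeal ℂ {x} : Ideal (MvPolynomial (Fin d) ℂ)).height = d := by
    rw [hdim] at hMh
    exact_mod_cast hMh
  rw [hMh'] at h
  have := ENat.natCast_le_natCast.1 h
  omega

/-- The chain rule for a rational polynomial `F` evaluated at complex polynomials `f j`. -/
theorem pderiv_aeval {m d : ℕ} (f : Fin m → MvPolynomial (Fin d) ℂ) (F : MvPolynomial (Fin m) ℚ)
    (i : Fin d) :
    pderiv i (aeval f F) = ∑ j, pderiv i (f j) * aeval f (pderiv j F) := by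
  induction F using MvPolynomial.induction_on with
  | C a => simp [MvPolynomial.algebraMap_apply]
  | add p q hp hq => simp [hp, hq, mul_add, Finset.sum_add_distrib]
  | mul_X p k hp =>
    classical
    have hk (j : Fin m) : pderiv i (f j) * aeval f (pderiv j (p * X k)) =
        (if j = k then pderiv i (f j) * aeval f p else 0) +
          pderiv i (f j) * aeval f (pderiv j p) * f k := by
      rw [pderiv_mul, pderiv_X, Pi.single_apply]
      split_ifs with h₁ h₂ h₂
      · simp; ring
      · exact absurd h₁.symm h₂
      · exact absurd h₂.symm h₁
      · simp; ring
    simp only [hk, Finset.sum_add_distrib, ← Finset.sum_mul, ← hp]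
    simp
    ring

theorem stmt16 (m : ℕ) (hm : 3 ≤ m) (F : MvPolynomial (Fin m) ℚ)
    (hF : F.IsHomogeneous 3)
    (hsmooth : ∀ x : Fin m → ℂ,
      (∀ i, MvPolynomial.aeval x (MvPolynomial.pderiv i F) = 0) → x = 0)
    (L : Submodule ℚ (Fin m → ℚ)) (hL : ∀ x ∈ L, MvPolynomial.eval x F = 0) :
    Module.finrank ℚ L ≤ m / 2 := by
  by_contra! hlt
  set d := Module.finrank ℚ L with hd
  let b := Module.finBasis ℚ L
  let B : Fin d → Fin m → ℂ := fun i j ↦ algebraMap ℚ ℂ ((b i : Fin m → ℚ) j)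
  have hB : LinearIndependent ℂ B := by
    have h := b.linearIndependent.map' L.subtype L.ker_subtype
    exact (linearIndependent_algebraMap_comp_iff (S := ℂ)).2 h
  let f : Fin m → MvPolynomial (Fin d) ℂ := fun j ↦ ∑ i, C (B i j) * X i
  have hf (y : Fin d → ℂ) (j : Fin m) : aeval y (f j) = (∑ i, y i • B i) j := by
    simp [f, mul_comm]
  have hev (y : Fin d → ℂ) (p : MvPolynomial (Fin m) ℚ) :
      aeval y (aeval f p) = aeval (∑ i, y i • B i) p := by
    have : ((aeval (R := ℂ) y).restrictScalars ℚ).comp (aeval f) =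
        aeval (R := ℚ) (∑ i, y i • B i) := by
      ext j
      simpa using hf y j
    exact DFunLike.congr_fun this p
  -- `F` vanishes on `L ⊗ ℂ`, because rational points form a box with infinite sides in `ℂ^d`.
  have hG : aeval f F = 0 := by
    refine MvPolynomial.funext_set (fun _ ↦ Set.range (algebraMap ℚ ℂ))
      (fun _ ↦ Set.infinite_range_of_injective (algebraMap ℚ ℂ).injective) fun y hy ↦ ?_
    choose q hq using fun i ↦ hy i trivial
    have hx : (∑ i, y i • B i) = algebraMap ℚ ℂ ∘ (∑ i, q i • (b i : Fin m → ℚ)) := by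
      ext j
      simp [B, ← hq]
    have := hev y F
    have hLx := hL (∑ i, q i • (b i : Fin m → ℚ)) (L.sum_mem fun i _ ↦ L.smul_mem (q i) (b i).2)
    rw [← coe_aeval_eq_eval, RingHom.coe_coe] at hLx
    rw [hx, aeval_algebraMap_apply, hLx, map_zero] at this
    simpa [aeval_eq_eval] using this
  -- `T c` is the derivative of `F` in the direction `c`, pulled back to `L ⊗ ℂ`.
  let T : (Fin m → ℂ) →ₗ[ℂ] MvPolynomial (Fin d) ℂ :=
    Fintype.linearCombination ℂ fun j ↦ aeval f (pderiv j F)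
  have hT : Submodule.span ℂ (Set.range B) ≤ LinearMap.ker T := by
    rw [Submodule.span_le]
    rintro _ ⟨i, rfl⟩
    have h := pderiv_aeval f F i
    rw [hG, map_zero] at h
    simp only [T, SetLike.mem_coe, LinearMap.mem_ker, Fintype.linearCombination_apply]
    rw [h]
    refine Finset.sum_congr rfl fun j _ ↦ ?_
    simp [f, pderiv_X, Pi.single_apply, smul_eq_C_mul]
  have hk := Submodule.finrank_mono hT
  rw [finrank_span_eq_card hB, Fintype.card_fin] at hk
  have hrn := T.finrank_range_add_finrank_ker
  rw [Module.finrank_fin_fun] at hrn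
  obtain ⟨y, hy0, hy⟩ := exists_common_zero (LinearMap.range T) (by omega) (by
    rintro _ ⟨c, rfl⟩
    simp only [T, Fintype.linearCombination_apply, map_sum, map_smul, hev]
    refine Finset.sum_eq_zero fun j _ ↦ ?_
    have h2 : (pderiv j F).IsHomogeneous 2 := hF.pderiv
    simp [aeval_zero, constantCoeff_eq, h2.coeff_eq_zero])
  have hx := hsmooth (∑ i, y i • B i) fun j ↦ by
    rw [← hev]
    exact hy _ ⟨Pi.single j 1, by simp [T]⟩
  exact hy0 (funext (Fintype.linearIndependent_iff.1 hB y hx))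
end

section
/- Let u and v be nonzero integers. For every ε > 0 there exists a constant K = K(u,v,ε) such that for all real C ≥ 1, the number of pairs (a,b) ∈ ℤ² with |a| ≤ C, |b| ≤ C, and (ua)(vb) a perfect square (i.e., (ua)(vb) = k² for some integer k) is at most K·C^{1+ε}. -/
open scoped BigOperators

/-!
Put `A = u * v * a` and `B = b`, so that `A * B` is a square and `|A|, |B| ≤ N`, where
`N = ⌊|u v| C⌋`. Two integers whose product is a square have the same squarefree part `s` up to
sign, hence `A = ± s x²` and `B = ± s y²` with `1 ≤ s ≤ N` and `x², y² ≤ N / s`; the signs are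
absorbed by writing `A = s x |x|` and `B = s y |y|` with `x, y` integers of either sign. This
includes the pairs with a zero entry (`exists_common_kernel`).

The triples `(s, x, y)` therefore parametrize all the pairs, and there are at most
`∑_{s ≤ N} (2 √(N/s) + 1)² ≤ 9 ∑_{s ≤ N} N / s = 9 N H_N ≤ 9 N (1 + log N)` of them
(`card_triples_le`). Finally `log N ≤ N ^ ε / ε`.
-/

lemma exists_sq_of_squarefree_mul_sq {s m B k : ℕ} (hs : Squarefree s) (hm : m ≠ 0)
    (h : m ^ 2 * s * B = k ^ 2) : ∃ y : ℕ, B = s * y ^ 2 := by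
  have hmk : m ∣ k := by
    rw [← Nat.pow_dvd_pow_iff (two_ne_zero), ← h, mul_assoc]
    exact dvd_mul_right _ _
  obtain ⟨j, rfl⟩ := hmk
  have hm2 : 0 < m ^ 2 := by positivity
  have hj : s * B = j ^ 2 := by
    apply Nat.eq_of_mul_eq_mul_left hm2
    rw [← mul_assoc, h]; ring
  have hsj : s ∣ j := by
    apply (hs.dvd_pow_iff_dvd two_ne_zero).1
    rw [← hj]
    exact dvd_mul_right _ _
  obtain ⟨y, rfl⟩ := hsj
  refine ⟨y, Nat.eq_of_mul_eq_mul_left (Nat.pos_of_ne_zero hs.ne_zero) ?_⟩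
  rw [hj]; ring

/-- Naturals with square product share a squarefree kernel `s`. If exactly one of them is zero, `s` is
the kernel of the other; if both are, `s = 1`. -/
lemma exists_common_kernel_nat {N A B k : ℕ} (hN : 1 ≤ N) (hA : A ≤ N) (hB : B ≤ N)
    (h : A * B = k ^ 2) :
    ∃ s x y : ℕ, 1 ≤ s ∧ s ≤ N ∧ A = s * x ^ 2 ∧ B = s * y ^ 2 := by
  rcases Nat.eq_zero_or_pos A with rfl | hA0
  · rcases Nat.eq_zero_or_pos B with rfl | hB0
    · exact ⟨1, 0, 0, le_rfl, hN, by simp, by simp⟩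
    · obtain ⟨s, m, hsm, hs⟩ := Nat.sq_mul_squarefree B
      refine ⟨s, 0, m, Nat.pos_of_ne_zero hs.ne_zero, ?_, by simp, by rw [← hsm]; ring⟩
      exact (Nat.le_of_dvd hB0 ⟨m ^ 2, by rw [← hsm]; ring⟩).trans hB
  · obtain ⟨s, m, hsm, hs⟩ := Nat.sq_mul_squarefree A
    have hm : m ≠ 0 := by
      rintro rfl
      simp at hsm
      omega
    obtain ⟨y, hy⟩ := exists_sq_of_squarefree_mul_sq hs hm (hsm.symm ▸ h)
    refine ⟨s, m, y, Nat.pos_of_ne_zero hs.ne_zero, ?_, by rw [← hsm]; ring, hy⟩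
    exact (Nat.le_of_dvd hA0 ⟨m ^ 2, by rw [← hsm]; ring⟩).trans hA

/-- An integer of absolute value `s x²` is `s z |z|`, where `z = ± x` carries its sign. -/
lemma exists_signed_root {N s x : ℕ} {A : ℤ} (hs : 1 ≤ s) (hA : A.natAbs ≤ N)
    (h : A.natAbs = s * x ^ 2) :
    ∃ z ∈ Finset.Icc (-(Nat.sqrt (N / s) : ℤ)) (Nat.sqrt (N / s)), A = s * (z * |z|) := by
  have hx : (x : ℤ) ≤ Nat.sqrt (N / s) := by
    rw [Nat.cast_le, Nat.le_sqrt', Nat.le_div_iff_mul_le hs]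
    linarith
  rcases Int.natAbs_eq A with hp | hp
  · refine ⟨x, Finset.mem_Icc.2 ⟨by omega, hx⟩, ?_⟩
    rw [hp, h, Nat.abs_cast]; push_cast; ring
  · refine ⟨-x, Finset.mem_Icc.2 ⟨by omega, by omega⟩, ?_⟩
    rw [hp, h, abs_neg, Nat.abs_cast]; push_cast; ring

/-- The triples `(s, x, y)` with `1 ≤ s ≤ N` and `|x|, |y| ≤ √(N / s)`. -/
noncomputable def kernelTriples (N : ℕ) : Finset ((_ : ℕ) × (ℤ × ℤ)) :=
  (Finset.Icc 1 N).sigma fun s =>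
    Finset.Icc (-(Nat.sqrt (N / s) : ℤ)) (Nat.sqrt (N / s)) ×ˢ
      Finset.Icc (-(Nat.sqrt (N / s) : ℤ)) (Nat.sqrt (N / s))

/-- Two integers in `[-N, N]` whose product is a square come from a triple `(s, x, y)`. -/
lemma exists_common_kernel {N : ℕ} {A B k : ℤ} (hN : 1 ≤ N) (hA : A.natAbs ≤ N)
    (hB : B.natAbs ≤ N) (h : A * B = k ^ 2) :
    ∃ t ∈ kernelTriples N, A = t.1 * (t.2.1 * |t.2.1|) ∧ B = t.1 * (t.2.2 * |t.2.2|) := by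
  have h' : A.natAbs * B.natAbs = k.natAbs ^ 2 := by
    rw [← Int.natAbs_mul, h, Int.natAbs_pow]
  obtain ⟨s, x, y, hs, hsN, hx, hy⟩ := exists_common_kernel_nat hN hA hB h'
  obtain ⟨z, hz, hz'⟩ := exists_signed_root hs hA hx
  obtain ⟨w, hw, hw'⟩ := exists_signed_root hs hB hy
  exact ⟨⟨s, z, w⟩, Finset.mem_sigma.2 ⟨Finset.mem_Icc.2 ⟨hs, hsN⟩,
    Finset.mem_product.2 ⟨hz, hw⟩⟩, hz', hw'⟩

lemma card_triples_le (N : ℕ) :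
    ((kernelTriples N).card : ℝ) ≤ 9 * (N * (1 + Real.log N)) := by
  have hterm : ∀ s ∈ Finset.Icc 1 N,
      (((Finset.Icc (-(Nat.sqrt (N / s) : ℤ)) (Nat.sqrt (N / s)) ×ˢ
        Finset.Icc (-(Nat.sqrt (N / s) : ℤ)) (Nat.sqrt (N / s))).card : ℕ) : ℝ)
        ≤ 9 * (N * (s : ℝ)⁻¹) := by
    intro s hs
    obtain ⟨hs1, hsN⟩ := Finset.mem_Icc.1 hs
    set r := Nat.sqrt (N / s) with hr
    have hr1 : 1 ≤ r := by
      rw [hr, Nat.le_sqrt', one_pow]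
      exact Nat.div_pos hsN hs1
    have hr2 : r ^ 2 ≤ N / s := Nat.sqrt_le' _
    have hcard : (Finset.Icc (-(r : ℤ)) r).card = 2 * r + 1 := by
      rw [Int.card_Icc]; omega
    rw [Finset.card_product, hcard]
    have h1 : (2 * r + 1) * (2 * r + 1) ≤ 9 * (N / s) := by nlinarith
    have h2 : ((N / s : ℕ) : ℝ) ≤ N / s := Nat.cast_div_le
    calc (((2 * r + 1) * (2 * r + 1) : ℕ) : ℝ) ≤ ((9 * (N / s) : ℕ) : ℝ) := by exact_mod_cast h1
      _ ≤ 9 * (N * (s : ℝ)⁻¹) := by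
        rw [← div_eq_mul_inv, Nat.cast_mul]
        push_cast
        linarith
  have hharm : ∑ s ∈ Finset.Icc 1 N, (s : ℝ)⁻¹ ≤ 1 + Real.log N := by
    have := harmonic_le_one_add_log N
    rw [harmonic_eq_sum_Icc] at this
    push_cast at this
    exact this
  rw [kernelTriples, Finset.card_sigma, Nat.cast_sum]
  refine (Finset.sum_le_sum hterm).trans ?_
  rw [← Finset.mul_sum, ← Finset.mul_sum]
  gcongr

theorem stmt17 (u v : ℤ) (hu : u ≠ 0) (hv : v ≠ 0) (ε : ℝ) (hε : 0 < ε) :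
    ∃ K : ℝ, ∀ C : ℝ, 1 ≤ C →
      (Nat.card {ab : ℤ × ℤ | (|ab.1| : ℝ) ≤ C ∧ (|ab.2| : ℝ) ≤ C ∧
          ∃ k : ℤ, u * ab.1 * (v * ab.2) = k ^ 2} : ℝ)
        ≤ K * C ^ (1 + ε) := by
  have huv : u * v ≠ 0 := mul_ne_zero hu hv
  have hM1 : (1 : ℝ) ≤ |((u * v : ℤ) : ℝ)| := by exact_mod_cast Int.one_le_abs huv
  refine ⟨9 * (1 + 1 / ε) * |((u * v : ℤ) : ℝ)| ^ (1 + ε), fun C hC => ?_⟩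
  set M : ℝ := |((u * v : ℤ) : ℝ)| with hM
  set N : ℕ := ⌊M * C⌋₊ with hN
  have hMC : 1 ≤ M * C := one_le_mul_of_one_le_of_one_le hM1 hC
  have hN1 : 1 ≤ N := by rw [hN, Nat.one_le_floor_iff]; exact hMC
  have hNle : (N : ℝ) ≤ M * C := Nat.floor_le (by linarith)
  have hNR : (1 : ℝ) ≤ N := by exact_mod_cast hN1
  set f : ((_ : ℕ) × (ℤ × ℤ)) → ℤ × ℤ := fun t =>
    (t.1 * (t.2.1 * |t.2.1|) / (u * v), t.1 * (t.2.2 * |t.2.2|)) with hf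
  have hcover : {ab : ℤ × ℤ | (|ab.1| : ℝ) ≤ C ∧ (|ab.2| : ℝ) ≤ C ∧
      ∃ k : ℤ, u * ab.1 * (v * ab.2) = k ^ 2} ⊆ ((kernelTriples N).image f : Set (ℤ × ℤ)) := by
    rintro ⟨a, b⟩ ⟨ha, hb, k, hk⟩
    dsimp only at ha hb hk
    have hA : (u * v * a).natAbs ≤ N := by
      rw [hN, Nat.le_floor_iff (by linarith), Nat.cast_natAbs, Int.cast_abs, Int.cast_mul, abs_mul]
      gcongr
    have hB : b.natAbs ≤ N := by
      rw [hN, Nat.le_floor_iff (by linarith), Nat.cast_natAbs, Int.cast_abs]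
      nlinarith
    obtain ⟨t, ht, h1, h2⟩ := exists_common_kernel (k := k) hN1 hA hB (by rw [← hk]; ring)
    refine Finset.mem_coe.2 (Finset.mem_image.2 ⟨t, ht, ?_⟩)
    rw [hf]
    dsimp only
    rw [← h1, ← h2, Int.mul_ediv_cancel_left _ huv]
  have hcard : Nat.card {ab : ℤ × ℤ | (|ab.1| : ℝ) ≤ C ∧ (|ab.2| : ℝ) ≤ C ∧
      ∃ k : ℤ, u * ab.1 * (v * ab.2) = k ^ 2} ≤ (kernelTriples N).card := by
    refine (Nat.card_mono (Finset.finite_toSet _) hcover).trans ?_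
    rw [Nat.card_coe_set_eq, Set.ncard_coe_finset]
    exact Finset.card_image_le
  have hlog : 1 + Real.log N ≤ (1 + 1 / ε) * (N : ℝ) ^ ε := by
    have h1 := Real.log_le_rpow_div (Nat.cast_nonneg N) hε
    have h2 : (1 : ℝ) ≤ (N : ℝ) ^ ε := Real.one_le_rpow hNR hε.le
    calc 1 + Real.log N ≤ (N : ℝ) ^ ε + (N : ℝ) ^ ε / ε := add_le_add h2 h1
      _ = _ := by ring
  calc (Nat.card {ab : ℤ × ℤ | (|ab.1| : ℝ) ≤ C ∧ (|ab.2| : ℝ) ≤ C ∧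
          ∃ k : ℤ, u * ab.1 * (v * ab.2) = k ^ 2} : ℝ)
      ≤ (kernelTriples N).card := by exact_mod_cast hcard
    _ ≤ 9 * (N * (1 + Real.log N)) := card_triples_le N
    _ ≤ 9 * (N * ((1 + 1 / ε) * (N : ℝ) ^ ε)) := by gcongr
    _ = 9 * (1 + 1 / ε) * (N : ℝ) ^ (1 + ε) := by
      rw [Real.rpow_add (by linarith), Real.rpow_one]; ring
    _ ≤ 9 * (1 + 1 / ε) * (M * C) ^ (1 + ε) := by gcongr
    _ = 9 * (1 + 1 / ε) * M ^ (1 + ε) * C ^ (1 + ε) := by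
      rw [Real.mul_rpow (by linarith) (by linarith)]; ring
end

section
/- Let m ≥ 2 and let F ∈ ℂ[x₁,…,x_m] be a homogeneous cubic form whose partial derivatives ∂F/∂x₁,…,∂F/∂x_m have no common zero in ℂ^m ∖ {0}. Then there exists x ∈ ℂ^m ∖ {0} with F(x) = 0 and det(Hess F)(x) ≠ 0, where Hess F denotes the m×m matrix of second-order partial derivatives of F. -/
open scoped BigOperators

/-!
Differentially, the statement says that the gradient map `∇F : ℂ^m → ℂ^m` is generically
unramified on the cone `F = 0`; the reason is that this map is finite. The proof runs in three steps.

* Finiteness. By the Nullstellensatz each variable is nilpotent modulo the partial derivatives `F_j`.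
  As these are homogeneous of positive degree, a graded Nakayama argument shows that `ℂ[x]` is a
  finite module over `S = ℂ[F_1, …, F_m]` (`finite_adjoin`).
* No derivations. A derivation from a ring to a field of characteristic zero which kills a subring
  over which the source is integral, and also kills the kernel of the map to that field,
  is zero (`derivation_eq_zero`).
* A derivation. Let `P` be an irreducible factor of `F` and `K = Frac (ℂ[x]/P)`. If `det Hess F`
  vanished wherever `F` does, then by the Nullstellensatz `Hess F` would be singular over `K`, with
  a kernel vector `v ≠ 0`. The derivation `D = ∑ v_j ∂_j : ℂ[x] → K` then kills every `F_i`. By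
  Euler's identity `2 F_j = ∑ x_i F_ij` and the symmetry of the Hessian, `D F = 0`. Smoothness
  gives `P² ∤ F`, hence `D P = 0`. So `D = 0`, i.e. `v = 0`, a contradiction.
-/

/-- Nullstellensatz for the irrelevant ideal: polynomials without a common zero outside the origin
generate an ideal containing a power of each variable. -/
lemma X_mem_radical {m : ℕ} (G : Fin m → MvPolynomial (Fin m) ℂ)
    (hG : ∀ x : Fin m → ℂ, x ≠ 0 → ∃ i, MvPolynomial.eval x (G i) ≠ 0) (i : Fin m) :
    (MvPolynomial.X i : MvPolynomial (Fin m) ℂ) ∈ (Ideal.span (Set.range G)).radical := by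
  rw [← MvPolynomial.vanishingIdeal_zeroLocus_eq_radical (K := ℂ),
    MvPolynomial.mem_vanishingIdeal_iff]
  intro x hx
  have h0 : x = 0 := by
    by_contra hne
    obtain ⟨j, hj⟩ := hG x hne
    apply hj
    have := hx (G j) (Ideal.subset_span ⟨j, rfl⟩)
    rwa [MvPolynomial.aeval_eq_eval] at this
  simp [h0]

lemma homogeneousComponent_mul_of_isHomogeneous {σ : Type*} (g f : MvPolynomial σ ℂ) {d : ℕ}
    (hf : f.IsHomogeneous d) (n : ℕ) :
    MvPolynomial.homogeneousComponent (n + d) (g * f) =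
      MvPolynomial.homogeneousComponent n g * f := by
  conv_lhs => rw [← MvPolynomial.sum_homogeneousComponent g]
  rw [Finset.sum_mul, map_sum]
  have : ∀ k ∈ Finset.range (g.totalDegree + 1), MvPolynomial.homogeneousComponent (n + d)
      (MvPolynomial.homogeneousComponent k g * f) =
      if n = k then MvPolynomial.homogeneousComponent n g * f else 0 := by
    intro k _
    rw [MvPolynomial.homogeneousComponent_of_mem
      ((MvPolynomial.homogeneousComponent_isHomogeneous k g).mul hf)]
    by_cases h : n = k
    · simp [h]
    · simp [h]
  rw [Finset.sum_congr rfl this, Finset.sum_ite_eq]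
  split_ifs with h
  · rfl
  · rw [MvPolynomial.homogeneousComponent_eq_zero _ _ (by simpa using h), zero_mul]

/-- Quadratic forms without a common zero outside the origin generate a subalgebra over which the
polynomial ring is finite: it is spanned by the monomials whose exponents are below the
nilpotency orders of the variables. -/
lemma finite_adjoin {m : ℕ} (G : Fin m → MvPolynomial (Fin m) ℂ)
    (hhom : ∀ i, (G i).IsHomogeneous 2)
    (hG : ∀ x : Fin m → ℂ, x ≠ 0 → ∃ i, MvPolynomial.eval x (G i) ≠ 0) :
    Module.Finite (Algebra.adjoin ℂ (Set.range G)) (MvPolynomial (Fin m) ℂ) := by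
  classical
  -- `X i ^ (N i + 2)` is a combination of the quadrics with coefficients of degree `N i`.
  have key : ∀ i, ∃ N : ℕ, ∃ c : Fin m → MvPolynomial (Fin m) ℂ,
      (∀ j, (c j).IsHomogeneous N) ∧ ∑ j, c j * G j = MvPolynomial.X i ^ (N + 2) := by
    intro i
    obtain ⟨N, hN⟩ := X_mem_radical G hG i
    have hN2 : (MvPolynomial.X i : MvPolynomial (Fin m) ℂ) ^ (N + 2) ∈
        Ideal.span (Set.range G) := by
      rw [pow_add]; exact Ideal.mul_mem_right _ _ hN
    obtain ⟨c, hc⟩ := Ideal.mem_span_range_iff_exists_fun.1 hN2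
    refine ⟨N, fun j => MvPolynomial.homogeneousComponent N (c j),
      fun j => MvPolynomial.homogeneousComponent_isHomogeneous _ _, ?_⟩
    have h := congrArg (MvPolynomial.homogeneousComponent (N + 2)) hc
    rw [map_sum, MvPolynomial.homogeneousComponent_eq_self
      (MvPolynomial.isHomogeneous_X_pow i (N + 2))] at h
    rw [← h]
    exact Finset.sum_congr rfl fun j _ =>
      (homogeneousComponent_mul_of_isHomogeneous _ _ (hhom j) N).symm
  choose N c hc hsum using key
  let B : Set (Fin m →₀ ℕ) := Set.Iic (Finsupp.equivFunOnFinite.symm fun i => N i + 1)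
  have hB : B.Finite := Set.finite_Iic _
  let S := Algebra.adjoin ℂ (Set.range G)
  let M : Submodule S (MvPolynomial (Fin m) ℂ) :=
    Submodule.span S ((fun s => MvPolynomial.monomial s (1 : ℂ)) '' B)
  have hmon : ∀ n : ℕ, ∀ s : Fin m →₀ ℕ, s.degree = n →
      MvPolynomial.monomial s (1 : ℂ) ∈ M := by
    intro n
    induction n using Nat.strong_induction_on with
    | _ n ih =>
      intro s hs
      by_cases hsB : s ∈ B
      · exact Submodule.subset_span ⟨s, hsB, rfl⟩
      obtain ⟨i, hi⟩ : ∃ i, N i + 2 ≤ s i := by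
        by_contra! h
        apply hsB
        intro i
        have := h i
        simp only [Finsupp.equivFunOnFinite_symm_apply_apply]
        omega
      have hle : Finsupp.single i (N i + 2) ≤ s := by
        rwa [Finsupp.single_le_iff]
      obtain ⟨t, rfl⟩ := exists_add_of_le hle
      have hdeg : N i + 2 + t.degree = n := by
        rw [← hs, map_add, Finsupp.degree_single]
      have hfac : MvPolynomial.monomial (Finsupp.single i (N i + 2) + t) (1 : ℂ) =
          ∑ j, G j * (MvPolynomial.monomial t 1 * c i j) := by
        have h1 : MvPolynomial.monomial (Finsupp.single i (N i + 2) + t) (1 : ℂ) =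
            MvPolynomial.X i ^ (N i + 2) * MvPolynomial.monomial t 1 := by
          rw [MvPolynomial.X_pow_eq_monomial, MvPolynomial.monomial_mul, one_mul]
        rw [h1, ← hsum, Finset.sum_mul]
        exact Finset.sum_congr rfl fun j _ => by ring
      rw [hfac]
      refine Submodule.sum_mem _ fun j _ => ?_
      refine M.smul_mem (⟨G j, Algebra.subset_adjoin ⟨j, rfl⟩⟩ : S) ?_
      have hh : (MvPolynomial.monomial t (1 : ℂ) * c i j).IsHomogeneous (t.degree + N i) :=
        (MvPolynomial.isHomogeneous_monomial _ rfl).mul (hc i j)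
      rw [MvPolynomial.as_sum (MvPolynomial.monomial t (1 : ℂ) * c i j)]
      refine Submodule.sum_mem _ fun u hu => ?_
      have hu' : u.degree = t.degree + N i := by
        by_contra hne
        exact (MvPolynomial.mem_support_iff.1 hu) (hh.coeff_eq_zero hne)
      have h2 := M.smul_of_tower_mem (MvPolynomial.coeff u (MvPolynomial.monomial t (1 : ℂ) * c i j))
        (ih u.degree (by omega) u rfl)
      rwa [MvPolynomial.smul_monomial, smul_eq_mul, mul_one] at h2
  refine ⟨⟨(hB.image fun s => MvPolynomial.monomial s (1 : ℂ)).toFinset, ?_⟩⟩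
  rw [Set.Finite.coe_toFinset, eq_top_iff]
  rintro p -
  change p ∈ M
  rw [MvPolynomial.as_sum p]
  refine Submodule.sum_mem _ fun u _ => ?_
  have h2 := M.smul_of_tower_mem (MvPolynomial.coeff u p) (hmon _ u rfl)
  rwa [MvPolynomial.smul_monomial, smul_eq_mul, mul_one] at h2

/-- Apply `D` to a polynomial relation for `y` over `S` that is nonzero and of least degree
over `K`: this gives `p'(y) • D y = 0`, where `p'(y) ≠ 0` by minimality. -/
lemma derivation_eq_zero {S A K : Type*} [CommRing S] [CommRing A] [Field K] [CharZero K]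
    [Algebra S A] [Algebra A K] [Algebra S K] [IsScalarTower S A K] [Algebra.IsIntegral S A]
    (D : Derivation S A K) (hD : ∀ a : A, algebraMap A K a = 0 → D a = 0) : D = 0 := by
  classical
  ext y
  have hex : ∃ n : ℕ, ∃ p : Polynomial S, p.map (algebraMap S K) ≠ 0 ∧
      algebraMap A K (Polynomial.aeval y p) = 0 ∧ (p.map (algebraMap S K)).natDegree = n := by
    obtain ⟨p, hp, hpy⟩ := Algebra.IsIntegral.isIntegral (R := S) y
    refine ⟨_, p, (hp.map _).ne_zero, ?_, rfl⟩
    rw [Polynomial.aeval_def, hpy, map_zero]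
  obtain ⟨p, hp0, hpy, hdeg⟩ := Nat.find_spec hex
  have hmin := fun k (hk : k < Nat.find hex) => Nat.find_min hex hk
  have hroot : ∀ q : Polynomial S, algebraMap A K (Polynomial.aeval y q) =
      (q.map (algebraMap S K)).eval (algebraMap A K y) := by
    intro q
    rw [Polynomial.eval_map_algebraMap, Polynomial.aeval_algebraMap_apply]
  have hpos : (p.map (algebraMap S K)).natDegree ≠ 0 := by
    intro h
    rw [hroot, Polynomial.eq_C_of_natDegree_eq_zero h, Polynomial.eval_C] at hpy
    apply hp0
    rw [Polynomial.eq_C_of_natDegree_eq_zero h, hpy, Polynomial.C_0]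
  have h1 := hD _ hpy
  rw [Derivation.map_aeval, Algebra.smul_def] at h1
  rcases mul_eq_zero.1 h1 with h | h
  · exfalso
    refine hmin _ ?_ ⟨Polynomial.derivative p, ?_, h, rfl⟩
    · rw [← hdeg, ← Polynomial.derivative_map]
      exact Polynomial.natDegree_derivative_lt hpos
    · rw [← Polynomial.derivative_map]
      intro h0
      exact hpos (Polynomial.derivative_eq_zero.1 h0)
  · simpa using h

lemma pderiv_pderiv_comm {σ : Type*} (i j : σ) (f : MvPolynomial σ ℂ) :
    MvPolynomial.pderiv i (MvPolynomial.pderiv j f) =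
      MvPolynomial.pderiv j (MvPolynomial.pderiv i f) := by
  classical
  have h : ⁅(MvPolynomial.pderiv i : Derivation ℂ (MvPolynomial σ ℂ) (MvPolynomial σ ℂ)),
      (MvPolynomial.pderiv j : Derivation ℂ (MvPolynomial σ ℂ) (MvPolynomial σ ℂ))⁆ = 0 := by
    refine MvPolynomial.derivation_ext fun k => ?_
    rw [Derivation.commutator_apply, MvPolynomial.pderiv_X, MvPolynomial.pderiv_X]
    by_cases h1 : j = k <;> by_cases h2 : i = k <;> simp [h1, h2]
  have h2 := congrArg (fun D : Derivation ℂ (MvPolynomial σ ℂ) (MvPolynomial σ ℂ) => D f) h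
  rw [Derivation.commutator_apply] at h2
  exact sub_eq_zero.1 h2

/-- Euler's identity for the partial derivatives of a cubic form. -/
lemma two_mul_pderiv {m : ℕ} {F : MvPolynomial (Fin m) ℂ} (hF : F.IsHomogeneous 3) (j : Fin m) :
    2 * MvPolynomial.pderiv j F = ∑ i, MvPolynomial.X i *
      MvPolynomial.pderiv j (MvPolynomial.pderiv i F) := by
  have h := (hF.pderiv (i := j)).sum_X_mul_pderiv
  simp only [nsmul_eq_mul, Nat.add_one_sub_one, Nat.cast_ofNat] at h
  rw [← h]
  exact Finset.sum_congr rfl fun i _ => by rw [pderiv_pderiv_comm]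

/-- Over a field `K` in which the zero locus of a simple factor `P` of `F` has its generic point,
the Hessian matrix of `F` is nonsingular: a kernel vector `v` defines the derivation `∑ v j ∂_j`,
which kills the partial derivatives of `F` as well as `P`. -/
lemma kernel_vector_eq_zero {m : ℕ} {F : MvPolynomial (Fin m) ℂ} (hF : F.IsHomogeneous 3)
    (hsmooth : ∀ x : Fin m → ℂ, x ≠ 0 →
      ∃ i, MvPolynomial.eval x (MvPolynomial.pderiv i F) ≠ 0)
    {K : Type*} [Field K] [CharZero K] [Algebra ℂ K] [Algebra (MvPolynomial (Fin m) ℂ) K]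
    [IsScalarTower ℂ (MvPolynomial (Fin m) ℂ) K] (P Q : MvPolynomial (Fin m) ℂ) (hPQ : F = P * Q)
    (hker : ∀ a, algebraMap (MvPolynomial (Fin m) ℂ) K a = 0 → P ∣ a)
    (hPK : algebraMap (MvPolynomial (Fin m) ℂ) K P = 0)
    (hQK : algebraMap (MvPolynomial (Fin m) ℂ) K Q ≠ 0) (v : Fin m → K)
    (hv : ∀ i, ∑ j, algebraMap (MvPolynomial (Fin m) ℂ) K
      (MvPolynomial.pderiv j (MvPolynomial.pderiv i F)) * v j = 0) : v = 0 := by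
  classical
  let A := MvPolynomial (Fin m) ℂ
  let G : Fin m → MvPolynomial (Fin m) ℂ := fun i => MvPolynomial.pderiv i F
  have hGhom : ∀ i, (G i).IsHomogeneous 2 := fun i => hF.pderiv
  obtain ⟨D, hDapp⟩ : ∃ D : Derivation ℂ A K,
      ∀ a : A, D a = ∑ j, algebraMap A K (MvPolynomial.pderiv j a) * v j := by
    refine ⟨∑ j, (LinearMap.toSpanSingleton A K (v j)).compDer (MvPolynomial.pderiv j), ?_⟩
    intro a
    have h1 : (∑ j, (LinearMap.toSpanSingleton A K (v j)).compDer (MvPolynomial.pderiv j)) a = ∑ j, ((LinearMap.toSpanSingleton A K (v j)).compDer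
        (MvPolynomial.pderiv j)) a := by
      have := congrFun (map_sum (Derivation.coeFnAddMonoidHom (R := ℂ) (A := A) (M := K))
        (fun j => (LinearMap.toSpanSingleton A K (v j)).compDer (MvPolynomial.pderiv j))
        Finset.univ) a
      rw [Finset.sum_apply] at this
      exact this
    rw [h1]
    refine Finset.sum_congr rfl fun j _ => ?_
    rw [← Algebra.smul_def]
    rfl
  have hDG : ∀ i, D (G i) = 0 := by
    intro i
    rw [hDapp]
    exact hv i
  have hDF : D F = 0 := by
    have h2 : ∀ j, (2 : K) * algebraMap A K (G j) =
        ∑ i, algebraMap A K (MvPolynomial.X i) * algebraMap A K (MvPolynomial.pderiv j (G i)) := by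
      intro j
      have he := congrArg (algebraMap A K) (two_mul_pderiv hF j)
      simpa only [map_mul, map_sum, map_ofNat] using he
    have h3 : (2 : K) * D F = 0 := by
      have hc : (2 : K) * D F =
          ∑ i, algebraMap A K (MvPolynomial.X i) * D (G i) := by
        rw [hDapp, Finset.mul_sum]
        simp only [hDapp (G _), Finset.mul_sum]
        rw [Finset.sum_comm]
        refine Finset.sum_congr rfl fun j _ => ?_
        rw [← mul_assoc]
        change 2 * algebraMap A K (G j) * v j = _
        rw [h2, Finset.sum_mul]
        exact Finset.sum_congr rfl fun i _ => mul_assoc _ _ _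
      rw [hc]
      exact Finset.sum_eq_zero fun i _ => by rw [hDG, mul_zero]
    exact (mul_eq_zero.1 h3).resolve_left two_ne_zero
  have hDP : D P = 0 := by
    rw [hPQ, Derivation.leibniz, Algebra.smul_def, Algebra.smul_def, hPK, zero_mul,
      zero_add] at hDF
    exact (mul_eq_zero.1 hDF).resolve_left hQK
  have hDker : ∀ a : A, algebraMap A K a = 0 → D a = 0 := by
    intro a ha
    obtain ⟨R, rfl⟩ := hker a ha
    rw [Derivation.leibniz, Algebra.smul_def, hPK, hDP, zero_mul, smul_zero, add_zero]
  -- `D` is linear over the subalgebra generated by the partial derivatives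
  let S := Algebra.adjoin ℂ (Set.range G)
  have hDS : ∀ s ∈ S, D s = 0 := by
    intro s hs
    induction hs using Algebra.adjoin_induction with
    | mem x hx => obtain ⟨i, rfl⟩ := hx; exact hDG i
    | algebraMap r => exact D.map_algebraMap r
    | add x y _ _ hx hy => rw [map_add, hx, hy, add_zero]
    | mul x y _ _ hx hy => rw [Derivation.leibniz, hx, hy, smul_zero, smul_zero, add_zero]
  let D' : Derivation S A K := Derivation.mk'
    { toFun := D
      map_add' := map_add D
      map_smul' := by
        intro s a
        change D ((s : A) * a) = (s : A) • D a
        rw [Derivation.leibniz, hDS s s.2, smul_zero, add_zero] }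
    (fun a b => D.leibniz a b)
  have : Module.Finite S A := finite_adjoin G hGhom hsmooth
  have : Algebra.IsIntegral S A := Algebra.IsIntegral.of_finite S A
  have hD0 : D' = 0 := derivation_eq_zero D' hDker
  funext j
  have h1 : D (MvPolynomial.X j) = 0 := congrArg (fun E => E (MvPolynomial.X j)) hD0
  rw [hDapp, Finset.sum_eq_single j] at h1
  · simpa using h1
  · intro i _ hij
    rw [MvPolynomial.pderiv_X_of_ne hij.symm, map_zero, zero_mul]
  · simp

theorem stmt18 (m : ℕ) (hm : 2 ≤ m) (F : MvPolynomial (Fin m) ℂ)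
    (hF : F.IsHomogeneous 3)
    (hsmooth : ∀ x : Fin m → ℂ, x ≠ 0 →
      ∃ i, MvPolynomial.eval x (MvPolynomial.pderiv i F) ≠ 0) :
    ∃ x : Fin m → ℂ, x ≠ 0 ∧ MvPolynomial.eval x F = 0 ∧
      (Matrix.of fun i j : Fin m =>
        MvPolynomial.eval x (MvPolynomial.pderiv j (MvPolynomial.pderiv i F))).det ≠ 0 := by
  classical
  by_contra! hcon
  let G : Fin m → MvPolynomial (Fin m) ℂ := fun i => MvPolynomial.pderiv i F
  have hGhom : ∀ i, (G i).IsHomogeneous 2 := fun i => hF.pderiv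
  let H : Matrix (Fin m) (Fin m) (MvPolynomial (Fin m) ℂ) :=
    Matrix.of fun i j => MvPolynomial.pderiv j (MvPolynomial.pderiv i F)
  have hHhom : ∀ i j, (H i j).IsHomogeneous 1 := fun i j => (hGhom i).pderiv
  have hHeval : ∀ x : Fin m → ℂ, MvPolynomial.eval x H.det =
      (Matrix.of fun i j : Fin m =>
        MvPolynomial.eval x (MvPolynomial.pderiv j (MvPolynomial.pderiv i F))).det := by
    intro x
    rw [RingHom.map_det]
    rfl
  have : NeZero m := ⟨by omega⟩
  have hHvan : ∀ x : Fin m → ℂ, MvPolynomial.eval x F = 0 → MvPolynomial.eval x H.det = 0 := by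
    intro x hx
    by_cases h0 : x = 0
    · -- at the origin the Hessian matrix itself vanishes, its entries being linear forms
      rw [RingHom.map_det]
      have : (MvPolynomial.eval x).mapMatrix H = 0 := by
        ext i j
        have := (hHhom i j).coeff_eq_zero (d := 0) (by simp)
        simpa [h0, MvPolynomial.constantCoeff_eq] using this
      rw [this, Matrix.det_zero]
    · rw [hHeval]; exact hcon x h0 hx
  -- an irreducible factor `P` of `F`
  have hF0 : F ≠ 0 := by
    rintro rfl
    obtain ⟨i, hi⟩ := hsmooth (fun _ => 1) (fun h => one_ne_zero (congrFun h 0))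
    simp at hi
  have hFu : ¬ IsUnit F := by
    intro hu
    have := hu.map MvPolynomial.constantCoeff
    rw [MvPolynomial.constantCoeff_eq, hF.coeff_eq_zero (by simp)] at this
    exact not_isUnit_zero this
  obtain ⟨P, hPirr, Q, hPQ⟩ := WfDvdMonoid.exists_irreducible_factor hFu hF0
  have hPp : Prime P := hPirr.prime
  let I : Ideal (MvPolynomial (Fin m) ℂ) := Ideal.span {P}
  have hI : I.IsPrime := (Ideal.span_singleton_prime hPp.ne_zero).2 hPp
  let K := FractionRing (MvPolynomial (Fin m) ℂ ⧸ I)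
  let A := MvPolynomial (Fin m) ℂ
  have hker : ∀ a : A, algebraMap A K a = 0 ↔ P ∣ a := by
    intro a
    rw [IsScalarTower.algebraMap_apply A (A ⧸ I) K,
      FaithfulSMul.algebraMap_eq_zero_iff, Ideal.Quotient.algebraMap_eq,
      Ideal.Quotient.eq_zero_iff_mem, Ideal.mem_span_singleton]
  -- `P` is a simple factor: otherwise it would divide all partial derivatives, hence all variables
  have hPQ' : ¬ P ∣ Q := by
    rintro ⟨R, rfl⟩
    have hle : Ideal.span (Set.range G) ≤ I := by
      rw [Ideal.span_le]
      rintro _ ⟨i, rfl⟩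
      refine Ideal.mem_span_singleton.2 ?_
      change P ∣ MvPolynomial.pderiv i F
      rw [hPQ, Derivation.leibniz, Derivation.leibniz]
      simp only [smul_eq_mul]
      exact ⟨P * MvPolynomial.pderiv i R + R * MvPolynomial.pderiv i P +
        R * MvPolynomial.pderiv i P, by ring⟩
    have hX : ∀ i : Fin m, P ∣ MvPolynomial.X i := by
      intro i
      have h := Ideal.radical_mono hle (X_mem_radical G hsmooth i)
      rw [hI.radical] at h
      exact Ideal.mem_span_singleton.1 h
    have h01 : (MvPolynomial.X ⟨0, by omega⟩ : A) ∣ MvPolynomial.X ⟨1, by omega⟩ :=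
      ((hPirr.dvd_irreducible_iff_associated MvPolynomial.X_prime.irreducible).1
        (hX ⟨0, by omega⟩)).symm.dvd.trans (hX _)
    rw [MvPolynomial.X_dvd_X] at h01
    simp at h01
  -- a kernel vector of the Hessian matrix over `K`
  have hdetI : P ∣ H.det := by
    have : H.det ∈ I.radical := by
      rw [← MvPolynomial.vanishingIdeal_zeroLocus_eq_radical (K := ℂ),
        MvPolynomial.mem_vanishingIdeal_iff]
      intro x hx
      rw [MvPolynomial.aeval_eq_eval]
      apply hHvan
      have := hx F (Ideal.mem_span_singleton.2 ⟨Q, hPQ⟩)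
      rwa [MvPolynomial.aeval_eq_eval] at this
    rw [hI.radical] at this
    exact Ideal.mem_span_singleton.1 this
  obtain ⟨v, hv0, hv⟩ : ∃ v : Fin m → K, v ≠ 0 ∧
      Matrix.mulVec ((algebraMap A K).mapMatrix H) v = 0 := by
    rw [Matrix.exists_mulVec_eq_zero_iff, ← RingHom.map_det]
    exact (hker _).2 hdetI
  have : CharZero K := charZero_of_injective_algebraMap (algebraMap ℂ K).injective
  exact hv0 (kernel_vector_eq_zero hF hsmooth P Q hPQ (fun a => (hker a).1)
    ((hker P).2 dvd_rfl) (fun h => hPQ' ((hker Q).1 h)) v fun i => congrFun hv i)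
end

section
/- Let p be a prime and let f₁, f₂, a₁, a₂ be integers with p ∤ 6·f₁f₂a₁a₂ and p ∤ (f₂a₁³ − f₁a₂³). Then the number of x = (x₁,x₂,x₃,x₄) ∈ 𝔽_p⁴ with f₁(x₁³ + x₂³) + f₂(x₃³ + x₄³) = 0 and a₁(x₁ + x₂) + a₂(x₃ + x₄) = 0 equals 2p² − p − χ(f₁f₂a₁a₂)·(p − 1), where χ denotes the Legendre symbol mod p (applied to the reduction of f₁f₂a₁a₂). -/
/-!
Put `s = x₀ + x₁`, `d = x₀ - x₁`, `t = x₂ + x₃`, `e = x₂ - x₃`, so that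
`4 (x₀³ + x₁³) = s³ + 3 s d²`, and parametrise the line `a₁ s + a₂ t = 0` by `s = a₂ u`,
`t = -a₁ u`. After rescaling `d` to `x = f₁ a₂ d` and writing `y = e`, the cubic equation becomes
`u (x² - m y² - c u²) = 0` with `m = f₁ f₂ a₁ a₂` and `c ≠ 0` (`card_section`).

Let `N n` be the number of solutions of `x² - m y² = n` (`normCount`). The slice `u = 0` has `p²`
points and each slice `u ≠ 0` has `N (c u²)`. The form `x² - m y²` is multiplicative and represents
every element, so `N` is constant on nonzero arguments (`normCount_eq`). Hence the slices `u ≠ 0`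
contribute as much as `∑_{n ≠ 0} N n = p² - N 0`, and
`N 0 = p + χ(m) (p - 1)` by counting square roots of `m y²` for each `y` (`normCount_zero`).
-/

/-- The number of pairs `(y, x)` with `x² - m y² = n`; the variable `y` comes first so that `N 0`
can be computed by fibring over it. -/
noncomputable def normCount {F : Type*} [Field F] (m n : F) : ℕ :=
  Nat.card {z : F × F // z.2 ^ 2 - m * z.1 ^ 2 = n}

section

variable {F : Type*} [Field F] [Fintype F]

/-- The form `x² - m y²` represents every element when `m ≠ 0`. -/
lemma exists_sq_sub_mul_sq_eq (hF : ringChar F ≠ 2) {m : F} (hm : m ≠ 0) (n : F) :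
    ∃ g h : F, g ^ 2 - m * h ^ 2 = n := by
  open Polynomial in
  obtain ⟨a, b, hab⟩ := FiniteField.exists_root_sum_quadratic (R := F)
    (f := C 1 * X ^ 2 + C 0 * X + C (-n)) (g := C (-m) * X ^ 2 + C 0 * X + C 0)
    (degree_quadratic one_ne_zero) (degree_quadratic (neg_ne_zero.2 hm))
    (FiniteField.odd_card_of_char_ne_two hF)
  refine ⟨a, b, ?_⟩
  simp at hab
  linear_combination hab

/-- Multiplication by an element `g + h √m` of norm `n' / n` identifies the two solution sets. -/
lemma normCount_eq (hF : ringChar F ≠ 2) {m : F} (hm : m ≠ 0) {n n' : F} (hn : n ≠ 0)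
    (hn' : n' ≠ 0) : normCount m n = normCount m n' := by
  classical
  obtain ⟨g, h, hgh⟩ := exists_sq_sub_mul_sq_eq hF hm (n' / n)
  have hk : n' / n ≠ 0 := div_ne_zero hn' hn
  have hk' : (n' / n) * n = n' := div_mul_cancel₀ _ hn
  generalize n' / n = k at *
  subst hk'
  unfold normCount
  refine Nat.card_congr
    { toFun := fun z => ⟨(g * z.1.1 + h * z.1.2, g * z.1.2 + m * h * z.1.1), ?_⟩
      invFun := fun z => ⟨((g * z.1.1 - h * z.1.2) / k, (g * z.1.2 - m * h * z.1.1) / k), ?_⟩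
      left_inv := ?_
      right_inv := ?_ }
  · obtain ⟨⟨y, x⟩, hz⟩ := z
    simp only at hz ⊢
    linear_combination (x ^ 2 - m * y ^ 2) * hgh + k * hz
  · obtain ⟨⟨y, x⟩, hz⟩ := z
    simp only at hz ⊢
    field_simp
    linear_combination (x ^ 2 - m * y ^ 2) * hgh + k * hz
  · rintro ⟨⟨y, x⟩, hz⟩
    simp only [Subtype.mk.injEq, Prod.mk.injEq]
    constructor
    · field_simp
      linear_combination y * hgh
    · field_simp
      linear_combination x * hgh
  · rintro ⟨⟨y, x⟩, hz⟩
    simp only [Subtype.mk.injEq, Prod.mk.injEq]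
    constructor
    · field_simp
      linear_combination y * hgh
    · field_simp
      linear_combination x * hgh

lemma sum_normCount (m : F) : ∑ n, normCount m n = Fintype.card F ^ 2 := by
  classical
  unfold normCount
  simp only [Nat.card_eq_fintype_card]
  rw [← Fintype.card_sigma, Fintype.card_congr (Equiv.sigmaFiberEquiv
    (fun z : F × F => z.2 ^ 2 - m * z.1 ^ 2)), Fintype.card_prod, sq]

lemma normCount_zero [DecidableEq F] (hF : ringChar F ≠ 2) (m : F) :
    (normCount m 0 : ℤ) = Fintype.card F + quadraticChar F m * (Fintype.card F - 1) := by
  have e : {z : F × F // z.2 ^ 2 - m * z.1 ^ 2 = 0} ≃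
      Σ y : F, {x : F // x ^ 2 = m * y ^ 2} :=
    { toFun := fun z => ⟨z.1.1, z.1.2, sub_eq_zero.1 z.2⟩
      invFun := fun z => ⟨(z.1, z.2.1), sub_eq_zero.2 z.2.2⟩
      left_inv := fun _ => rfl
      right_inv := fun _ => rfl }
  have key : ∀ y : F, (Fintype.card {x : F // x ^ 2 = m * y ^ 2} : ℤ) =
      1 + quadraticChar F m * (if y = 0 then 0 else 1) := by
    intro y
    have := quadraticChar_card_sqrts hF (m * y ^ 2)
    rw [Set.toFinset_card] at this
    rw [show Fintype.card {x : F // x ^ 2 = m * y ^ 2} =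
      Fintype.card {x : F | x ^ 2 = m * y ^ 2} from Fintype.card_congr (Equiv.refl _), this,
      map_mul, add_comm]
    split_ifs with hy
    · simp [hy]
    · rw [quadraticChar_sq_one' hy]
  have hsum : ∑ y : F, (if y = 0 then (0 : ℤ) else 1) = Fintype.card F - 1 := by
    have : ∀ y : F, (if y = 0 then (0 : ℤ) else 1) = 1 - (if y = 0 then 1 else 0) := by
      intro y; split_ifs <;> simp
    simp [this, Finset.sum_sub_distrib]
  unfold normCount
  rw [Nat.card_congr e, Nat.card_eq_fintype_card, Fintype.card_sigma]
  push_cast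
  simp only [key]
  rw [Finset.sum_add_distrib, ← Finset.mul_sum, hsum]
  simp

/-- The slices `u ≠ 0` of `u (x² - m y² - c u²) = 0` contribute `∑_{n ≠ 0} N n`, and the slice
`u = 0` is the whole plane. -/
lemma card_cone [DecidableEq F] (hF : ringChar F ≠ 2) {m c : F} (hm : m ≠ 0) (hc : c ≠ 0) :
    (Nat.card {w : F × F × F // w.1 * (w.2.2 ^ 2 - m * w.2.1 ^ 2 - c * w.1 ^ 2) = 0} : ℤ) =
      2 * (Fintype.card F : ℤ) ^ 2 - Fintype.card F
        - quadraticChar F m * (Fintype.card F - 1) := by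
  have e : {w : F × F × F // w.1 * (w.2.2 ^ 2 - m * w.2.1 ^ 2 - c * w.1 ^ 2) = 0} ≃
      Σ u : F, {z : F × F // u * (z.2 ^ 2 - m * z.1 ^ 2 - c * u ^ 2) = 0} :=
    { toFun := fun w => ⟨w.1.1, w.1.2, w.2⟩
      invFun := fun w => ⟨(w.1, w.2.1), w.2.2⟩
      left_inv := fun _ => rfl
      right_inv := fun _ => rfl }
  have hz : Fintype.card {z : F × F // (0 : F) * (z.2 ^ 2 - m * z.1 ^ 2 - c * 0 ^ 2) = 0} =
      Fintype.card F ^ 2 := by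
    rw [Fintype.card_congr (Equiv.subtypeUnivEquiv (fun z => zero_mul _)), Fintype.card_prod, sq]
  have hnz : ∀ u ∈ Finset.univ.erase (0 : F),
      Fintype.card {z : F × F // u * (z.2 ^ 2 - m * z.1 ^ 2 - c * u ^ 2) = 0} =
        normCount m u := by
    intro u hu
    have hu : u ≠ 0 := Finset.ne_of_mem_erase hu
    rw [normCount_eq hF hm hu (mul_ne_zero hc (pow_ne_zero 2 hu))]
    rw [← Nat.card_eq_fintype_card]
    exact Nat.card_congr (Equiv.subtypeEquivRight fun z => by
      simp [hu, sub_eq_zero])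
  have hs := sum_normCount m
  rw [← Finset.add_sum_erase _ _ (Finset.mem_univ (0 : F))] at hs
  have h0 := normCount_zero hF m
  rw [Nat.card_congr e, Nat.card_eq_fintype_card, Fintype.card_sigma,
    ← Finset.add_sum_erase _ _ (Finset.mem_univ (0 : F)), hz, Finset.sum_congr rfl hnz]
  zify at hs ⊢
  linarith

end

/-- The linear change of variables to sums and differences, restricted to the hyperplane. -/
lemma card_section {F : Type*} [Field F] {f₁ f₂ a₁ a₂ : F} (h2 : (2 : F) ≠ 0) (h3 : (3 : F) ≠ 0) (hf₁ : f₁ ≠ 0)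
    (ha₂ : a₂ ≠ 0) :
    Nat.card {x : Fin 4 → F |
        f₁ * ((x 0) ^ 3 + (x 1) ^ 3) + f₂ * ((x 2) ^ 3 + (x 3) ^ 3) = 0 ∧
        a₁ * (x 0 + x 1) + a₂ * (x 2 + x 3) = 0} =
      Nat.card {w : F × F × F // w.1 * (w.2.2 ^ 2 - f₁ * f₂ * a₁ * a₂ * w.2.1 ^ 2
        - f₁ * a₂ * (f₂ * a₁ ^ 3 - f₁ * a₂ ^ 3) / 3 * w.1 ^ 2) = 0} := by
  refine Nat.card_congr
    { toFun := fun x => ⟨((x.1 0 + x.1 1) / a₂, x.1 2 - x.1 3, f₁ * a₂ * (x.1 0 - x.1 1)), ?_⟩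
      invFun := fun w => ⟨![(a₂ * w.1.1 + w.1.2.2 / (f₁ * a₂)) / 2,
        (a₂ * w.1.1 - w.1.2.2 / (f₁ * a₂)) / 2, (-a₁ * w.1.1 + w.1.2.1) / 2,
        (-a₁ * w.1.1 - w.1.2.1) / 2], ?_⟩
      left_inv := ?_
      right_inv := ?_ }
  · obtain ⟨x, hx, hl⟩ := x
    have ht : x 2 = -a₁ * ((x 0 + x 1) / a₂) - x 3 := by
      field_simp
      linear_combination hl
    have hs : x 0 = a₂ * ((x 0 + x 1) / a₂) - x 1 := by
      field_simp
      ring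
    simp only
    generalize (x 0 + x 1) / a₂ = u at *
    rw [ht, hs] at hx
    rw [ht, hs]
    field_simp
    linear_combination (4 * f₁ * a₂) * hx
  · obtain ⟨⟨u, y, x⟩, hw⟩ := w
    simp only at hw
    have hw' : u * (3 * x ^ 2 - 3 * (f₁ * f₂ * a₁ * a₂) * y ^ 2
        - f₁ * a₂ * (f₂ * a₁ ^ 3 - f₁ * a₂ ^ 3) * u ^ 2) = 0 := by
      field_simp at hw
      linear_combination hw
    obtain ⟨d, rfl⟩ : ∃ d, x = f₁ * a₂ * d := ⟨x / (f₁ * a₂), by field_simp⟩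
    have hd : f₁ * a₂ * d / (f₁ * a₂) = d := by field_simp
    have hfa : f₁ * a₂ ≠ 0 := mul_ne_zero hf₁ ha₂
    simp only [Set.mem_ofPred_eq, Matrix.cons_val, hd]
    constructor
    · refine (mul_eq_zero.1 (?_ : (f₁ * a₂) * _ = 0)).resolve_left hfa
      field_simp
      linear_combination 2 * hw'
    · field_simp
      ring
  · rintro ⟨x, hx, hl⟩
    apply Subtype.ext
    funext i
    fin_cases i <;> simp <;> field_simp
    · ring
    · ring
    · linear_combination -hl
    · linear_combination -hl
  · rintro ⟨⟨u, y, x⟩, hw⟩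
    simp only [Subtype.mk.injEq, Prod.mk.injEq, Matrix.cons_val]
    refine ⟨?_, ?_, ?_⟩ <;> field_simp <;> ring

theorem stmt19 (p : ℕ) [Fact p.Prime] (f₁ f₂ a₁ a₂ : ℤ)
    (h1 : ¬ ((p : ℤ) ∣ 6 * f₁ * f₂ * a₁ * a₂))
    (h2 : ¬ ((p : ℤ) ∣ f₂ * a₁ ^ 3 - f₁ * a₂ ^ 3)) :
    (Nat.card {x : Fin 4 → ZMod p |
        (f₁ : ZMod p) * ((x 0) ^ 3 + (x 1) ^ 3) + (f₂ : ZMod p) * ((x 2) ^ 3 + (x 3) ^ 3) = 0 ∧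
        (a₁ : ZMod p) * (x 0 + x 1) + (a₂ : ZMod p) * (x 2 + x 3) = 0} : ℤ)
      = 2 * (p : ℤ) ^ 2 - p - legendreSym p (f₁ * f₂ * a₁ * a₂) * ((p : ℤ) - 1) := by
  rw [← ZMod.intCast_zmod_eq_zero_iff_dvd] at h1 h2
  push_cast at h1 h2
  rw [show (6 : ZMod p) = 2 * 3 by norm_num] at h1
  simp only [mul_eq_zero, not_or] at h1
  obtain ⟨⟨⟨⟨⟨h₂, h₃⟩, hf₁⟩, hf₂⟩, ha₁⟩, ha₂⟩ := h1
  have hF : ringChar (ZMod p) ≠ 2 := fun h => h₂ (by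
    have := ringChar.Nat.cast_ringChar (R := ZMod p)
    rw [h] at this
    exact_mod_cast this)
  rw [card_section h₂ h₃ hf₁ ha₂, card_cone hF
    (mul_ne_zero (mul_ne_zero (mul_ne_zero hf₁ hf₂) ha₁) ha₂)
    (div_ne_zero (mul_ne_zero (mul_ne_zero hf₁ ha₂) h2) h₃), ZMod.card, legendreSym]
  push_cast
  rfl
end
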